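/- Suppose n is odd. Then the fixed subring A^G is generated as a ℂ-algebra by the orbit sums of degrees n, 2n and 3n; that is, A^G equals the ℂ-subalgebra of A generated by the set {O(a,b,c) : a, b, c ≥ 0, a+2b+c ∈ {n, 2n, 3n}}. (Together with the lower bound β(g) ≥ 3n, this shows β(g) = 3n for the action on the down-up algebra A(0,1) when n is odd.) -/

import Mathlib

/-!
Setting: `lam n = exp(2πi/n)` is a primitive `n`-th root of unity in `ℂ`.
`DUAlg` is the graded down-up algebra `A(0,1) = ℂ⟨u,d⟩/(d²u - ud², du² - u²d)`,
with generators `uGen`, `dGen`.  The automorphism `g` (of order `2n`) is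
determined by `g u = d`, `g d = lam n • u`, and generates the cyclic group `G`,
so that the fixed subring `A^G` is `{a | g a = a}`.  The orbit sum is
`orbitSum n a b c = u^a (du)^b d^c + (lam n)^(b+c) • (d^a (ud)^b u^c)`.
-/

noncomputable section

/-- `lam n = exp(2πi/n)`, a primitive `n`-th root of unity. -/
def lam (n : ℕ) : ℂ := Complex.exp (2 * (Real.pi : ℂ) * Complex.I / (n : ℂ))

/-- The defining relations of the down-up algebra `A(0,1)`:
`d²u = ud²` and `du² = u²d` (here `0` plays the role of `u`, `1` of `d`). -/
inductive DownUpRel : FreeAlgebra ℂ (Fin 2) → FreeAlgebra ℂ (Fin 2) → Prop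
  | rel1 : DownUpRel (FreeAlgebra.ι ℂ 1 * FreeAlgebra.ι ℂ 1 * FreeAlgebra.ι ℂ 0)
      (FreeAlgebra.ι ℂ 0 * FreeAlgebra.ι ℂ 1 * FreeAlgebra.ι ℂ 1)
  | rel2 : DownUpRel (FreeAlgebra.ι ℂ 1 * FreeAlgebra.ι ℂ 0 * FreeAlgebra.ι ℂ 0)
      (FreeAlgebra.ι ℂ 0 * FreeAlgebra.ι ℂ 0 * FreeAlgebra.ι ℂ 1)

/-- The graded down-up algebra `A(0,1)`. -/
abbrev DUAlg : Type := RingQuot DownUpRel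

/-- The generator `u` of `A(0,1)`. -/
def uGen : DUAlg := RingQuot.mkAlgHom ℂ DownUpRel (FreeAlgebra.ι ℂ 0)

/-- The generator `d` of `A(0,1)`. -/
def dGen : DUAlg := RingQuot.mkAlgHom ℂ DownUpRel (FreeAlgebra.ι ℂ 1)

/-- Orbit sum `O(a,b,c) = u^a (du)^b d^c + λ^(b+c) d^a (ud)^b u^c`. -/
def orbitSum (n a b c : ℕ) : DUAlg :=
  uGen ^ a * (dGen * uGen) ^ b * dGen ^ c
    + (lam n ^ (b + c)) • (dGen ^ a * (uGen * dGen) ^ b * uGen ^ c)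

/-!
The span `V` of `u` and `d` satisfies `xyz = zyx`. Products of evenly many elements of `V` therefore
commute with each other, and it follows that `xyz = zyx` also holds for `x, y, z` in the same power
`Vᵐ`. Let `g u = d`, `g d = ζ u`, and put `T x = x + g x`. For `b, c, d ∈ Vⁿ` this identity turns
the expansions of products of values of `T` into
`2 T(abcd) = T(abc) T(d) + T(a) T(dcb) - T(a g(d)) T(cb)`,
so by induction all values of `T` in degrees divisible by `n` come from those in degrees `n`, `2n`,
`3n`. These values exhaust the fixed ring: `g²` acts on `Vᵏ` by the scalar `ζᵏ`, so a fixed element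
`x` is a combination of words of degree divisible by `n`, and `x = T x / 2`.
-/

open scoped Pointwise

/-- A set in a magma is triple symmetric if reversing a product of three of its elements does not
change it. This is the form in which the relations of the down-up algebra `A(0,1)` are used. -/
def TripleSymm {M : Type*} [Mul M] (S : Set M) : Prop :=
  ∀ x ∈ S, ∀ y ∈ S, ∀ z ∈ S, x * y * z = z * y * x

theorem commute_of_mem_pow {M : Type*} [Monoid M] {S : Set M} {y : M}
    (h : ∀ x ∈ S, Commute x y) (k : ℕ) : ∀ x ∈ S ^ k, Commute x y := by
  induction k with
  | zero => simp
  | succ k ih =>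
    rw [pow_succ]
    rintro _ ⟨a, ha, b, hb, rfl⟩
    exact (ih a ha).mul_left (h b hb)

namespace TripleSymm

section Monoid

variable {M : Type*} [Monoid M] {S : Set M}

theorem commute_of_mem_sq (hS : TripleSymm S) {x y : M} (hx : x ∈ S ^ 2) (hy : y ∈ S ^ 2) :
    Commute x y := by
  rw [pow_two] at hx hy
  obtain ⟨a, ha, b, hb, rfl⟩ := hx
  obtain ⟨c, hc, d, hd, rfl⟩ := hy
  calc a * b * (c * d) = a * b * c * d := (mul_assoc ..).symm
    _ = c * (b * a * d) := by rw [hS a ha b hb c hc]; simp only [mul_assoc]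
    _ = c * d * (a * b) := by rw [hS b hb a ha d hd]; simp only [mul_assoc]

theorem commute_of_even (hS : TripleSymm S) {i j : ℕ} (hi : Even i) (hj : Even j) {x y : M}
    (hx : x ∈ S ^ i) (hy : y ∈ S ^ j) : Commute x y := by
  obtain ⟨i, rfl⟩ := hi.two_dvd
  obtain ⟨j, rfl⟩ := hj.two_dvd
  rw [pow_mul] at hx hy
  refine commute_of_mem_pow (fun a ha => ?_) i x hx
  exact (commute_of_mem_pow (fun b hb => hS.commute_of_mem_sq hb ha) j y hy).symm

theorem mul_mul_eq_of_odd (hS : TripleSymm S) {k : ℕ} (hk : Odd k) {x b y : M}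
    (hx : x ∈ S) (hb : b ∈ S ^ k) (hy : y ∈ S) : x * b * y = y * b * x := by
  obtain ⟨i, rfl⟩ := hk
  rw [pow_succ'] at hb
  obtain ⟨s, hs, e, he, rfl⟩ := hb
  have comm : ∀ z ∈ S, Commute (z * s) e := fun z hz =>
    hS.commute_of_even even_two (even_two_mul i) (pow_two S ▸ Set.mul_mem_mul hz hs) he
  calc x * (s * e) * y = x * s * e * y := by simp only [mul_assoc]
    _ = e * (x * s * y) := by rw [(comm x hx).eq, mul_assoc]
    _ = e * (y * s) * x := by rw [hS x hx s hs y hy]; simp only [mul_assoc]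
    _ = y * (s * e) * x := by rw [← (comm y hy).eq]; simp only [mul_assoc]

theorem mul_mul_eq_of_mem_pow_odd (hS : TripleSymm S) (i : ℕ) {a b c : M}
    (ha : a ∈ S ^ (2 * i + 1)) (hb : b ∈ S ^ (2 * i + 1)) (hc : c ∈ S ^ (2 * i + 1)) :
    a * b * c = c * b * a := by
  have hodd : Odd (2 * i + 1) := odd_two_mul_add_one i
  have hba : b * a ∈ S ^ (2 * i + 1 + (2 * i + 1)) := pow_add S _ _ ▸ Set.mul_mem_mul hb ha
  rw [pow_succ'] at ha hc
  obtain ⟨z, hz, e, he, rfl⟩ := ha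
  obtain ⟨y, hy, f, hf, rfl⟩ := hc
  have hby : b * y ∈ S ^ (2 * i + 1 + 1) := pow_succ S _ ▸ Set.mul_mem_mul hb hy
  have comm_by : Commute (b * y) e := hS.commute_of_even hodd.add_one (even_two_mul i) hby he
  have comm_ba : Commute (b * (z * e)) f :=
    hS.commute_of_even (hodd.add_odd hodd) (even_two_mul i) hba hf
  calc z * e * b * (y * f) = z * (e * (b * y)) * f := by simp only [mul_assoc]
    _ = z * b * y * e * f := by rw [← comm_by.eq]; simp only [mul_assoc]
    _ = y * (b * (z * e) * f) := by
      rw [hS.mul_mul_eq_of_odd hodd hz hb hy]; simp only [mul_assoc]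
    _ = y * f * b * (z * e) := by rw [comm_ba.eq]; simp only [mul_assoc]

protected theorem pow (hS : TripleSymm S) (k : ℕ) : TripleSymm (S ^ k) := by
  intro a ha b hb c hc
  rcases Nat.even_or_odd k with hk | ⟨i, rfl⟩
  · have comm {x y : M} (hx : x ∈ S ^ k) (hy : y ∈ S ^ k) : x * y = y * x :=
      (hS.commute_of_even hk hk hx hy).eq
    rw [comm ha hb, mul_assoc, comm ha hc, ← mul_assoc, comm hb hc]
  · exact hS.mul_mul_eq_of_mem_pow_odd i ha hb hc

theorem of_commute_sq {u d : M} (hu : Commute (u ^ 2) d) (hd : Commute (d ^ 2) u) :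
    TripleSymm {u, d} := by
  have huud : u * u * d = d * u * u := by simpa only [pow_two, mul_assoc] using hu.eq
  have hddu : d * d * u = u * d * d := by simpa only [pow_two, mul_assoc] using hd.eq
  rintro x (rfl | rfl) y (rfl | rfl) z (rfl | rfl) <;> first | rfl | simp only [huud, hddu]

end Monoid

protected theorem span {R A : Type*} [CommSemiring R] [Semiring A] [Algebra R A] {S : Set A}
    (hS : TripleSymm S) : TripleSymm (Submodule.span R S : Set A) := by
  intro x hx y hy z hz
  have hx_span : ∀ y ∈ S, ∀ z ∈ S, x * y * z = z * y * x := fun y hy z hz =>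
    LinearMap.eqOn_span (f := LinearMap.mulRight R z ∘ₗ LinearMap.mulRight R y)
      (g := LinearMap.mulLeft R (z * y)) (fun x hx => hS x hx y hy z hz) hx
  have hy_span : ∀ z ∈ S, x * y * z = z * y * x := fun z hz =>
    LinearMap.eqOn_span (f := LinearMap.mulRight R z ∘ₗ LinearMap.mulLeft R x)
      (g := LinearMap.mulRight R x ∘ₗ LinearMap.mulLeft R z) (fun y hy => hx_span y hy z hz) hy
  exact LinearMap.eqOn_span (f := LinearMap.mulLeft R (x * y))
    (g := LinearMap.mulRight R x ∘ₗ LinearMap.mulRight R y) hy_span hz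

end TripleSymm

theorem exists_mul_pow_mul_pow_mul_pow_eq {M : Type*} [Monoid M] {u d : M}
    (hu : Commute (u ^ 2) d) (hd : Commute (d ^ 2) u) (a b c : ℕ) :
    ∃ a' b' c' : ℕ, a' + 2 * b' + c' = a + 2 * b + c + 1 ∧
      d * (u ^ a * (d * u) ^ b * d ^ c) = u ^ a' * (d * u) ^ b' * d ^ c' := by
  have d_mul_even (e : ℕ) : d * u ^ (2 * e) = u ^ (2 * e) * d := by
    rw [pow_mul]; exact (hu.pow_left e).eq.symm
  have d_mul_du (b : ℕ) : d * (d * u) ^ (b + 1) = u * (d * u) ^ b * d ^ 2 := by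
    have comm : Commute (d ^ 2) ((d * u) ^ b) :=
      (((Commute.refl d).pow_left 2).mul_right hd).pow_right b
    rw [pow_succ', mul_assoc u, ← comm.eq, ← mul_assoc u, ← hd.eq, pow_two]
    simp only [mul_assoc]
  rcases Nat.even_or_odd' a with ⟨e, rfl | rfl⟩
  · cases b with
    | zero => exact ⟨2 * e, 0, c + 1, by ring, by simp [← mul_assoc, d_mul_even, pow_succ']⟩
    | succ b =>
      refine ⟨2 * e + 1, b, c + 2, by ring, ?_⟩
      calc _ = d * u ^ (2 * e) * (d * u) ^ (b + 1) * d ^ c := by simp only [mul_assoc]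
        _ = u ^ (2 * e) * (d * (d * u) ^ (b + 1)) * d ^ c := by
          rw [d_mul_even]; simp only [mul_assoc]
        _ = u ^ (2 * e + 1) * (d * u) ^ b * d ^ (c + 2) := by
          rw [d_mul_du, pow_succ u, add_comm c, pow_add d]; simp only [mul_assoc]
  · refine ⟨2 * e, b + 1, c, by ring, ?_⟩
    rw [pow_succ u, pow_succ' (d * u)]
    simp only [← mul_assoc, d_mul_even]

theorem exists_eq_pow_mul_pow_mul_pow {M : Type*} [Monoid M] {u d : M}
    (hu : Commute (u ^ 2) d) (hd : Commute (d ^ 2) u) {k : ℕ} {x : M}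
    (hx : x ∈ ({u, d} : Set M) ^ k) :
    ∃ a b c : ℕ, a + 2 * b + c = k ∧ x = u ^ a * (d * u) ^ b * d ^ c := by
  induction k generalizing x with
  | zero => exact ⟨0, 0, 0, rfl, by simpa using hx⟩
  | succ k ih =>
    rw [pow_succ'] at hx
    obtain ⟨s, hs, y, hy, rfl⟩ := hx
    obtain ⟨a, b, c, rfl, rfl⟩ := ih hy
    rcases hs with hs | hs <;> rw [hs]
    · exact ⟨a + 1, b, c, by ring, by simp only [pow_succ', mul_assoc]⟩
    · obtain ⟨a', b', c', hdeg, h⟩ := exists_mul_pow_mul_pow_mul_pow_eq hu hd a b c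
      exact ⟨a', b', c', hdeg, h⟩

theorem pow_mul_pow_mul_pow_mem_pow {M : Type*} [Monoid M] {S : Set M} {u d : M} (hu : u ∈ S)
    (hd : d ∈ S) (a b c : ℕ) : u ^ a * (d * u) ^ b * d ^ c ∈ S ^ (a + 2 * b + c) := by
  have hdu : d * u ∈ S ^ 2 := pow_two S ▸ Set.mul_mem_mul hd hu
  rw [pow_add, pow_add, pow_mul]
  exact Set.mul_mem_mul (Set.mul_mem_mul (Set.pow_mem_pow hu) (Set.pow_mem_pow hdu))
    (Set.pow_mem_pow hd)

theorem exists_mem_pow_of_mem_closure {M : Type*} [Monoid M] {S : Set M} {x : M}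
    (hx : x ∈ Submonoid.closure S) : ∃ k : ℕ, x ∈ S ^ k := by
  induction hx using Submonoid.closure_induction with
  | mem x hx => exact ⟨1, by simpa using hx⟩
  | one => exact ⟨0, by simp⟩
  | mul x y _ _ hx hy =>
    obtain ⟨i, hi⟩ := hx
    obtain ⟨j, hj⟩ := hy
    exact ⟨i + j, pow_add S i j ▸ Set.mul_mem_mul hi hj⟩

theorem map_eq_pow_smul_of_mem_pow {R A : Type*} [CommSemiring R] [Semiring A] [Algebra R A]
    {f : A →ₐ[R] A} {S : Set A} {ζ : R} (h : ∀ x ∈ S, f x = ζ • x) (k : ℕ) :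
    ∀ x ∈ S ^ k, f x = ζ ^ k • x := by
  induction k with
  | zero => simp
  | succ k ih =>
    rw [pow_succ]
    rintro _ ⟨a, ha, b, hb, rfl⟩
    simp only [map_mul, ih a ha, h b hb, smul_mul_smul_comm, pow_succ]

theorem mem_span_sep_of_map_eq_self {R V : Type*} [CommRing R] [IsDomain R] [AddCommGroup V]
    [Module R V] [Module.IsTorsionFree R V] {f : Module.End R V} {s : Set V}
    (hs : Submodule.span R s = ⊤) (heig : ∀ v ∈ s, ∃ μ : R, f v = μ • v) {x : V} (hx : f x = x) :
    x ∈ Submodule.span R {v ∈ s | f v = v} := by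
  have hfix : Submodule.span R {v ∈ s | f v = v} ≤ f.eigenspace 1 :=
    Submodule.span_le.2 fun v hv => by simpa using hv.2
  have htop : ⊤ ≤ Submodule.span R {v ∈ s | f v = v} ⊔ ⨆ μ ≠ 1, f.eigenspace μ := by
    refine hs ▸ Submodule.span_le.2 fun v hv => ?_
    obtain ⟨μ, hμ⟩ := heig v hv
    rcases eq_or_ne μ 1 with rfl | hne
    · exact Submodule.mem_sup_left (Submodule.subset_span ⟨hv, by simpa using hμ⟩)
    · exact Submodule.mem_sup_right
        (le_iSup₂_of_le (f := fun μ (_ : μ ≠ 1) => f.eigenspace μ) μ hne le_rfl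
          (Module.End.mem_eigenspace_iff.2 hμ))
  obtain ⟨w, hw, y, hy, rfl⟩ := Submodule.mem_sup.1 (htop (Submodule.mem_top (x := x)))
  have hy_fixed : y ∈ f.eigenspace 1 :=
    (Submodule.add_mem_iff_right _ (hfix hw)).1 (by simpa using hx)
  have hy_zero : y = 0 := Submodule.disjoint_def.1 (f.eigenspaces_iSupIndep 1) y hy_fixed hy
  simpa [hy_zero] using hw

theorem two_mul_add_map_eq {A : Type*} [Ring A] (g : A →+* A) (a : A) {p q d : A}
    (hd : g (g d) = d) (hpd : p * d = d * q) (hpgd : p * g d = g d * q) :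
    2 * (a * p * d + g (a * p * d)) = (a * p + g (a * p)) * (d + g d)
      + (a + g a) * (d * q + g (d * q)) - (a * g d + g (a * g d)) * (q + g q) := by
  have hgpgd : g p * g d = g d * g q := by simpa only [map_mul] using congrArg g hpd
  have hgpd : g p * d = d * g q := by simpa only [map_mul, hd] using congrArg g hpgd
  simp only [map_mul, hd, two_mul, mul_add, add_mul, mul_assoc, hpd, hpgd, hgpgd, hgpd]
  abel

/-- The orbit sum `u^a (du)^b d^c + ζ^(b+c) d^a (ud)^b u^c` of a pair of elements `u`, `d` of an
arbitrary algebra, with an arbitrary scalar `ζ` in place of `lam n`. -/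
def pairOrbitSum {R A : Type*} [CommSemiring R] [Semiring A] [Algebra R A] (u d : A) (ζ : R)
    (a b c : ℕ) : A :=
  u ^ a * (d * u) ^ b * d ^ c + ζ ^ (b + c) • (d ^ a * (u * d) ^ b * u ^ c)

section Trace

variable {R A : Type*} [CommRing R] [Ring A] [Algebra R A] {g : A →ₐ[R] A}

theorem add_map_mul_mem (h2 : IsUnit (2 : R)) {B : Subalgebra R A} {a p q d : A}
    (hgd : g (g d) = d) (hpd : p * d = d * q) (hpgd : p * g d = g d * q)
    (hap : a * p + g (a * p) ∈ B) (hd : d + g d ∈ B) (ha : a + g a ∈ B)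
    (hdq : d * q + g (d * q) ∈ B) (hagd : a * g d + g (a * g d) ∈ B) (hq : q + g q ∈ B) :
    a * p * d + g (a * p * d) ∈ B := by
  have hmem : (2 : R) • (a * p * d + g (a * p * d)) ∈ B := by
    rw [two_smul, ← two_mul]
    exact two_mul_add_map_eq (g : A →+* A) a hgd hpd hpgd ▸
      sub_mem (add_mem (mul_mem hap hd) (mul_mem ha hdq)) (mul_mem hagd hq)
  exact (Submodule.smul_mem_iff_of_isUnit (Subalgebra.toSubmodule B) h2).1 hmem

theorem add_map_mem_of_mem_pow_mul (h2 : IsUnit (2 : R)) {S : Set A} (hS : TripleSymm S)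
    (hgS : Set.MapsTo g S S) {n : ℕ} (hgg : ∀ x ∈ S ^ n, g (g x) = x) {B : Subalgebra R A}
    (hB : ∀ j ∈ Set.Icc 1 3, ∀ x ∈ S ^ (j * n), x + g x ∈ B) (k : ℕ) :
    ∀ x ∈ S ^ (k * n), x + g x ∈ B := by
  have g_mem_pow {x : A} (hx : x ∈ S ^ n) : g x ∈ S ^ n :=
    Set.pow_subset_pow_left hgS.image_subset (Set.image_pow g S n ▸ Set.mem_image_of_mem g hx)
  have mul_mem_pow {i j : ℕ} {x y : A} (hx : x ∈ S ^ (i * n)) (hy : y ∈ S ^ (j * n)) :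
      x * y ∈ S ^ ((i + j) * n) := by
    rw [add_mul, pow_add]
    exact Set.mul_mem_mul hx hy
  induction k using Nat.strong_induction_on with
  | _ k ih =>
  intro x hx
  rcases lt_or_ge k 4 with hk | hk
  · rcases Nat.eq_zero_or_pos k with rfl | hpos
    · obtain rfl : x = 1 := by simpa using hx
      simpa using add_mem (one_mem B) (one_mem B)
    · exact hB k ⟨hpos, by omega⟩ x hx
  obtain ⟨m, rfl⟩ := Nat.exists_eq_add_of_le' hk
  rw [show (m + 4) * n = (m + 1) * n + (n + n) + n by ring, pow_add, pow_add, pow_add S n] at hx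
  obtain ⟨_, ⟨a, ha, _, ⟨b, hb, c, hc, rfl⟩, rfl⟩, d, hd, rfl⟩ := hx
  have rev {x : A} (hx : x ∈ S ^ n) : b * c * x = x * (c * b) := by
    rw [hS.pow n b hb c hc x hx, mul_assoc]
  have hgd := g_mem_pow hd
  refine add_map_mul_mem h2 (hgg d hd) (rev hd) (rev hgd) ?_ ?_ ?_ ?_ ?_ ?_
  all_goals rw [← one_mul n] at hb hc hd hgd
  · exact ih (m + 1 + (1 + 1)) (by omega) _ (mul_mem_pow ha (mul_mem_pow hb hc))
  · exact ih 1 (by omega) d hd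
  · exact ih (m + 1) (by omega) a ha
  · exact ih (1 + (1 + 1)) (by omega) _ (mul_mem_pow hd (mul_mem_pow hc hb))
  · exact ih (m + 1 + 1) (by omega) _ (mul_mem_pow ha hgd)
  · exact ih (1 + 1) (by omega) _ (mul_mem_pow hc hb)

variable {u d : A} {ζ : R} (hgu : g u = d) (hgd : g d = ζ • u)
include hgu hgd

theorem mapsTo_span_pair :
    Set.MapsTo g (Submodule.span R {u, d} : Set A) (Submodule.span R {u, d} : Set A) := by
  change Submodule.span R {u, d} ≤ (Submodule.span R {u, d}).comap g.toLinearMap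
  rw [Submodule.span_le]
  rintro _ (rfl | rfl)
  · exact Submodule.subset_span (by simp [hgu])
  · simpa [hgd] using Submodule.smul_mem _ ζ (Submodule.subset_span (Set.mem_insert u _))

theorem map_map_of_mem_span_pair_pow (k : ℕ) {x : A}
    (hx : x ∈ (Submodule.span R {u, d} : Set A) ^ k) : g (g x) = ζ ^ k • x := by
  refine map_eq_pow_smul_of_mem_pow (f := g.comp g) (fun y hy => ?_) k x hx
  refine LinearMap.eqOn_span (f := (g.comp g).toLinearMap) (g := ζ • LinearMap.id) ?_ hy
  rintro _ (rfl | rfl) <;> simp [hgu, hgd]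

theorem add_map_pow_mul_pow_mul_pow (a b c : ℕ) :
    u ^ a * (d * u) ^ b * d ^ c + g (u ^ a * (d * u) ^ b * d ^ c) =
      pairOrbitSum u d ζ a b c := by
  simp [pairOrbitSum, hgu, hgd, smul_pow, smul_smul, pow_add, mul_comm]

theorem add_map_mem_of_pairOrbitSum_mem (hu : Commute (u ^ 2) d) (hd : Commute (d ^ 2) u) {k : ℕ}
    {N : Submodule R A} (hN : ∀ a b c : ℕ, a + 2 * b + c = k → pairOrbitSum u d ζ a b c ∈ N)
    {x : A} (hx : x ∈ (Submodule.span R {u, d} : Set A) ^ k) : x + g x ∈ N := by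
  have hx_span : x ∈ Submodule.span R (({u, d} : Set A) ^ k) := by
    rw [← Submodule.span_pow]
    exact Submodule.pow_subset_pow _ hx
  suffices Submodule.span R (({u, d} : Set A) ^ k) ≤ N.comap (LinearMap.id + g.toLinearMap) from
    this hx_span
  refine Submodule.span_le.2 fun w hw => ?_
  obtain ⟨a, b, c, habc, rfl⟩ := exists_eq_pow_mul_pow_mul_pow hu hd hw
  change _ + g _ ∈ N
  exact add_map_pow_mul_pow_mul_pow hgu hgd a b c ▸ hN a b c habc

theorem map_pairOrbitSum_eq_self {a b c : ℕ} (hζ : ζ ^ (a + 2 * b + c) = 1) :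
    g (pairOrbitSum u d ζ a b c) = pairOrbitSum u d ζ a b c := by
  have hmem : u ^ a * (d * u) ^ b * d ^ c ∈
      (Submodule.span R {u, d} : Set A) ^ (a + 2 * b + c) :=
    pow_mul_pow_mul_pow_mem_pow (Submodule.subset_span (by simp))
      (Submodule.subset_span (by simp)) a b c
  rw [← add_map_pow_mul_pow_mul_pow hgu hgd, map_add,
    map_map_of_mem_span_pair_pow hgu hgd _ hmem, hζ, one_smul, add_comm]

variable [IsDomain R] [Module.IsTorsionFree R A]

theorem mem_span_iUnion_pow_of_map_eq_self {n : ℕ} (hζ : IsPrimitiveRoot ζ n)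
    (hgen : Algebra.adjoin R {u, d} = ⊤) {x : A} (hx : g x = x) :
    x ∈ Submodule.span R (⋃ k, (Submodule.span R {u, d} : Set A) ^ (k * n)) := by
  have htop : Submodule.span R (Submonoid.closure {u, d} : Set A) = ⊤ := by
    rw [← Algebra.adjoin_eq_span, hgen, Algebra.top_toSubmodule]
  have heig : ∀ w ∈ Submonoid.closure {u, d}, ∃ k : ℕ,
      w ∈ (Submodule.span R {u, d} : Set A) ^ k ∧ g (g w) = ζ ^ k • w := fun w hw =>
    have ⟨k, hk⟩ := exists_mem_pow_of_mem_closure hw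
    have hk := Set.pow_subset_pow_left Submodule.subset_span hk
    ⟨k, hk, map_map_of_mem_span_pair_pow hgu hgd k hk⟩
  have hmem := mem_span_sep_of_map_eq_self (f := (g.comp g).toLinearMap) htop
    (fun w hw => let ⟨k, hk⟩ := heig w hw; ⟨ζ ^ k, hk.2⟩) (x := x) (by simp [hx])
  refine Submodule.span_le.2 ?_ hmem
  rintro w ⟨hw, hfix : g (g w) = w⟩
  obtain ⟨k, hk, hgg⟩ := heig w hw
  rcases eq_or_ne w 0 with rfl | hw0
  · exact zero_mem _
  have hζk : ζ ^ k = 1 := smul_left_injective R hw0 (by simpa [hfix] using hgg.symm)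
  obtain ⟨m, rfl⟩ := hζ.dvd_of_pow_eq_one k hζk
  exact Submodule.subset_span (Set.mem_iUnion.2 ⟨m, mul_comm n m ▸ hk⟩)

theorem mem_of_map_eq_self (h2 : IsUnit (2 : R)) {n : ℕ} (hζ : IsPrimitiveRoot ζ n)
    (hgen : Algebra.adjoin R {u, d} = ⊤) (hu : Commute (u ^ 2) d) (hd : Commute (d ^ 2) u)
    {B : Subalgebra R A} (hB : ∀ a b c : ℕ,
      a + 2 * b + c = n ∨ a + 2 * b + c = 2 * n ∨ a + 2 * b + c = 3 * n →
      pairOrbitSum u d ζ a b c ∈ B)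
    {x : A} (hx : g x = x) : x ∈ B := by
  have hB_low : ∀ j ∈ Set.Icc 1 3, ∀ w ∈ (Submodule.span R {u, d} : Set A) ^ (j * n),
      w + g w ∈ B := by
    refine fun j ⟨h1, h3⟩ w hw => add_map_mem_of_pairOrbitSum_mem (N := Subalgebra.toSubmodule B)
      hgu hgd hu hd (fun a b c habc => hB a b c ?_) hw
    interval_cases j <;> simp [habc]
  have hgg : ∀ w ∈ (Submodule.span R {u, d} : Set A) ^ n, g (g w) = w := fun w hw => by
    rw [map_map_of_mem_span_pair_pow hgu hgd n hw, hζ.pow_eq_one, one_smul]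
  have hB_all := add_map_mem_of_mem_pow_mul h2 (TripleSymm.of_commute_sq hu hd).span
    (mapsTo_span_pair hgu hgd) hgg hB_low
  have hle : Submodule.span R (⋃ k, (Submodule.span R {u, d} : Set A) ^ (k * n)) ≤
      (Subalgebra.toSubmodule B).comap (LinearMap.id + g.toLinearMap) := by
    rw [Submodule.span_le, Set.iUnion_subset_iff]
    exact hB_all
  have h2x : (2 : R) • x ∈ Subalgebra.toSubmodule B := by
    simpa [two_smul, hx] using hle (mem_span_iUnion_pow_of_map_eq_self hgu hgd hζ hgen hx)
  exact (Submodule.smul_mem_iff_of_isUnit _ h2).1 h2x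

end Trace

/-- For `n = 0`, `hζ` says that no positive power of `ζ` is `1`. -/
theorem fixed_eq_adjoin_three_n_of_odd_general {R A : Type*} [CommRing R] [IsDomain R] [Ring A]
    [Algebra R A] [Module.IsTorsionFree R A] (h2 : IsUnit (2 : R)) {n : ℕ} {ζ : R}
    (hζ : IsPrimitiveRoot ζ n) {u d : A} (hgen : Algebra.adjoin R {u, d} = ⊤)
    (hu : Commute (u ^ 2) d) (hd : Commute (d ^ 2) u)
    (g : A →ₐ[R] A) (hgu : g u = d) (hgd : g d = ζ • u) :
    {x : A | g x = x} =
      ↑(Algebra.adjoin R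
        {x : A | ∃ a b c : ℕ,
          (a + 2 * b + c = n ∨ a + 2 * b + c = 2 * n ∨ a + 2 * b + c = 3 * n) ∧
          x = pairOrbitSum u d ζ a b c}) := by
  refine Set.Subset.antisymm (fun x hx => ?_)
    (Algebra.adjoin_le (S := AlgHom.equalizer g (AlgHom.id R A)) ?_)
  · exact mem_of_map_eq_self hgu hgd h2 hζ hgen hu hd
      (fun a b c h => Algebra.subset_adjoin (Set.mem_ofPred.2 ⟨a, b, c, h, rfl⟩)) hx
  · rintro _ ⟨a, b, c, h, rfl⟩
    have hdvd : n ∣ a + 2 * b + c := by rcases h with h | h | h <;> simp [h]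
    exact map_pairOrbitSum_eq_self hgu hgd ((hζ.pow_eq_one_iff_dvd _).2 hdvd)

theorem uGen_sq_commute_dGen : Commute (uGen ^ 2) dGen := by
  have := RingQuot.mkAlgHom_rel ℂ DownUpRel.rel2
  simpa only [map_mul, ← mul_assoc, pow_two, Commute, SemiconjBy, uGen, dGen] using this.symm

theorem dGen_sq_commute_uGen : Commute (dGen ^ 2) uGen := by
  have := RingQuot.mkAlgHom_rel ℂ DownUpRel.rel1
  simpa only [map_mul, ← mul_assoc, pow_two, Commute, SemiconjBy, uGen, dGen] using this

theorem adjoin_uGen_dGen : Algebra.adjoin ℂ {uGen, dGen} = ⊤ := by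
  have h := congrArg (Subalgebra.map (RingQuot.mkAlgHom ℂ DownUpRel))
    (FreeAlgebra.adjoin_range_ι ℂ (Fin 2))
  rw [AlgHom.map_adjoin, Algebra.map_top,
    (AlgHom.range_eq_top _).2 (RingQuot.mkAlgHom_surjective ℂ DownUpRel), ← Set.range_comp] at h
  rw [← h]
  congr 1
  ext x
  simp [Fin.exists_fin_two, uGen, dGen, eq_comm]

/-- If `n` is odd then the fixed subring `A^G` of the down-up algebra `A(0,1)`
is generated as a `ℂ`-algebra by the orbit sums of degrees `n`, `2n`, `3n`. -/
theorem fixed_eq_adjoin_three_n_of_odd (n : ℕ) (hodd : Odd n)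
    (g : DUAlg ≃ₐ[ℂ] DUAlg) (hgu : g uGen = dGen) (hgd : g dGen = lam n • uGen) :
    {x : DUAlg | g x = x} =
      ↑(Algebra.adjoin ℂ
        {x : DUAlg | ∃ a b c : ℕ,
          (a + 2 * b + c = n ∨ a + 2 * b + c = 2 * n ∨ a + 2 * b + c = 3 * n) ∧
          x = orbitSum n a b c}) :=
  fixed_eq_adjoin_three_n_of_odd_general (isUnit_iff_ne_zero.2 two_ne_zero)
    (Complex.isPrimitiveRoot_exp n hodd.pos.ne') adjoin_uGen_dGen uGen_sq_commute_dGen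
    dGen_sq_commute_uGen (g : DUAlg →ₐ[ℂ] DUAlg) hgu hgd
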